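/- Biorthogonality of the elliptic 6j-symbols: for integers 0 ≤ n, l ≤ k and all α, β, γ, δ ∈ ℂ such that every bracket appearing in a denominator of the R-symbols involved is nonzero, one has Σ_{m=0}^{k} R_n^m(α,β,γ,δ;k) · R_m^l(γ,δ,α,β;k) = δ_{n,l} (1 if n = l, 0 otherwise). -/

import Mathlib

noncomputable section

open Complex Finset

namespace Ell

/-- `x^s = exp(-iπ s /(r τ))`. -/
def xp (τ : ℂ) (r : ℝ) (s : ℂ) : ℂ :=
  Complex.exp (-Complex.I * (Real.pi : ℂ) * s / ((r : ℂ) * τ))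

/-- `Θ_p(z) = ∏_{j ≥ 0} (1 - z p^j)(1 - p^{j+1}/z)(1 - p^{j+1})`. -/
def Theta (p z : ℂ) : ℂ :=
  ∏' j : ℕ, ((1 - z * p ^ j) * (1 - p ^ (j + 1) / z) * (1 - p ^ (j + 1)))

/-- The bracket `[u] = x^{u²/r - u} Θ_p(x^{2u})` with `p = x^{2r}`. -/
def br (τ : ℂ) (r : ℝ) (u : ℂ) : ℂ :=
  xp τ r (u ^ 2 / (r : ℂ) - u) * Theta (xp τ r (2 * (r : ℂ))) (xp τ r (2 * u))

/-- Elliptic shifted factorial `[u]_n = ∏_{j=0}^{n-1} [u+j]`. -/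
def brF (τ : ℂ) (r : ℝ) (u : ℂ) (n : ℕ) : ℂ :=
  ∏ j ∈ Finset.range n, br τ r (u + (j : ℂ))

/-- Elliptic binomial coefficient `C_n^k(α,β,γ)`. -/
def Cnk (τ : ℂ) (r : ℝ) (k n : ℕ) (α β γ : ℂ) : ℂ :=
  brF τ r 1 k / (brF τ r 1 n * brF τ r 1 (k - n)) *
    (brF τ r (α - γ) n * brF τ r (α + γ + (k : ℂ) - (n : ℂ)) n *
      brF τ r (α - β) (k - n) * brF τ r (α + β + (n : ℂ)) (k - n)) /
    (brF τ r (β - γ + (n : ℂ) - (k : ℂ)) n * brF τ r (γ - β - (n : ℂ)) (k - n) *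
      brF τ r (β + γ) k)

/-- The elliptic 6j-symbol `R_n^m(α,β,γ,δ;k)`. -/
def Rnm (τ : ℂ) (r : ℝ) (k n m : ℕ) (α β γ δ : ℂ) : ℂ :=
  ∑ j ∈ Finset.range (min n m + 1),
    Cnk τ r n j α γ (β + (k : ℂ) - (n : ℂ)) * Cnk τ r (k - j) (m - j) β (γ + (j : ℂ)) δ

/-- Terminating very-well-poised elliptic hypergeometric sum with explicit
truncation `N`:  `Σ_{j=0}^N ([u₀+2j]/[u₀]) ([u₀]_j/[1]_j) ∏ᵢ [uᵢ]_j/[u₀+1-uᵢ]_j`. -/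
def Vsum (τ : ℂ) (r : ℝ) (u₀ : ℂ) (us : List ℂ) (N : ℕ) : ℂ :=
  ∑ j ∈ Finset.range (N + 1),
    br τ r (u₀ + 2 * (j : ℂ)) / br τ r u₀ * (brF τ r u₀ j / brF τ r 1 j) *
      (us.map fun ui => brF τ r ui j / brF τ r (u₀ + 1 - ui) j).prod

/-- "Every bracket appearing in a denominator of `C_n^k(·,β,γ)` is nonzero". -/
def CdenomNZ (τ : ℂ) (r : ℝ) (k n : ℕ) (β γ : ℂ) : Prop :=
  brF τ r 1 n ≠ 0 ∧ brF τ r 1 (k - n) ≠ 0 ∧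
    brF τ r (β - γ + (n : ℂ) - (k : ℂ)) n ≠ 0 ∧
    brF τ r (γ - β - (n : ℂ)) (k - n) ≠ 0 ∧ brF τ r (β + γ) k ≠ 0

/-- "Every bracket appearing in a denominator of `R_n^m(α,β,γ,δ;k)` is nonzero". -/
def RdenomNZ (τ : ℂ) (r : ℝ) (k n m : ℕ) (β γ δ : ℂ) : Prop :=
  ∀ j ≤ min n m,
    CdenomNZ τ r n j γ (β + (k : ℂ) - (n : ℂ)) ∧
      CdenomNZ τ r (k - j) (m - j) (γ + (j : ℂ)) δ

/-- Jacobi theta `ϑ₁(v|σ)`. -/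
def th1 (v σ : ℂ) : ℂ :=
  2 * Complex.exp (2 * (Real.pi : ℂ) * Complex.I * σ / 8) *
    (∏' n : ℕ, (1 - Complex.exp (2 * (Real.pi : ℂ) * Complex.I * σ) ^ (n + 1))) *
    Complex.sin ((Real.pi : ℂ) * v) *
    ∏' n : ℕ,
      (1 - 2 * Complex.exp (2 * (Real.pi : ℂ) * Complex.I * σ) ^ (n + 1) *
            Complex.cos (2 * (Real.pi : ℂ) * v) +
        Complex.exp (2 * (Real.pi : ℂ) * Complex.I * σ) ^ (2 * (n + 1)))

/-- Jacobi theta `ϑ₀(v|σ)`. -/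
def th0 (v σ : ℂ) : ℂ :=
  -Complex.I * Complex.exp ((Real.pi : ℂ) * Complex.I * (v + σ / 4)) * th1 (v + σ / 2) σ

/-- Jacobi theta `ϑ₂(v|σ)`. -/
def th2 (v σ : ℂ) : ℂ := th1 (v + 1 / 2) σ

/-- Jacobi theta `ϑ₃(v|σ)`. -/
def th3 (v σ : ℂ) : ℂ :=
  Complex.exp ((Real.pi : ℂ) * Complex.I * (v + σ / 4)) * th1 (v + (σ + 1) / 2) σ

/-- Intertwining vector component `ψ_ε(u)^a_b`, `ε ∈ {1, -1}`. -/
def psi (τ : ℂ) (r : ℝ) (u : ℂ) (ε : ℤ) (a b : ℤ) : ℂ :=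
  if ε = 1 then th0 ((((a : ℂ) - (b : ℂ)) * u + (a : ℂ)) / (2 * (r : ℂ))) (τ / 2)
  else th3 ((((a : ℂ) - (b : ℂ)) * u + (a : ℂ)) / (2 * (r : ℂ))) (τ / 2)

/-- The constant `C = x^{-r/4} e^{-iπ/4} τ^{1/2}`. -/
def Cc (τ : ℂ) (r : ℝ) : ℂ :=
  xp τ r (-(r : ℂ) / 4) * Complex.exp (-(Real.pi : ℂ) * Complex.I / 4) * τ ^ (1 / 2 : ℂ)

/-- Dual intertwining vector component `ψ*_ε(u)^a_b = -ε(a-b) C² ψ_{-ε}(u-1)^a_b/(2[b][u])`. -/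
def psiStar (τ : ℂ) (r : ℝ) (u : ℂ) (ε : ℤ) (a b : ℤ) : ℂ :=
  -(ε : ℂ) * ((a : ℂ) - (b : ℂ)) * Cc τ r ^ 2 * psi τ r (u - 1) (-ε) a b /
    (2 * br τ r (b : ℂ) * br τ r u)

/-- Sign attached to a boolean. -/
def sg (b : Bool) : ℤ := if b then 1 else -1

/-- Canonical path from `a`: up for `j ≤ n`, down afterwards. -/
def cpathZ (a n : ℤ) (j : ℕ) : ℤ := if (j : ℤ) ≤ n then a + j else a + 2 * n - j

/-- Admissibility: `a - b ∈ {-k, -k+2, …, k}`. -/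
def adm (k : ℕ) (a b : ℤ) : Prop := (a - b).natAbs ≤ k ∧ (a - b - (k : ℤ)) % 2 = 0

instance (k : ℕ) (a b : ℤ) : Decidable (adm k a b) := by unfold adm; infer_instance

/-- Fused intertwining vector component `ψ^{(k)}_μ(u)^a_b` (zero if `a,b` not admissible). -/
def psiF (τ : ℂ) (r : ℝ) (k : ℕ) (μ : ℤ) (u : ℂ) (a b : ℤ) : ℂ :=
  if adm k a b then
    ∑ ε ∈ Finset.univ.filter fun ε : Fin k → Bool => (∑ j, sg (ε j)) = μ,
      ∏ j : Fin k,
        psi τ r (u + (k : ℂ) - (((j : ℕ) + 1 : ℕ) : ℂ)) (sg (ε j))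
          (cpathZ a (((k : ℤ) - (a - b)) / 2) (j : ℕ))
          (cpathZ a (((k : ℤ) - (a - b)) / 2) ((j : ℕ) + 1))
  else 0

/-- Partial-sum path attached to a sign sequence `δ`, starting at `a`. -/
def spath (k : ℕ) (a : ℤ) (δ : Fin k → Bool) (j : ℕ) : ℤ :=
  a + ∑ i ∈ Finset.range j, if h : i < k then sg (δ ⟨i, h⟩) else 0

/-- Fused dual intertwining vector component `ψ*^{(k)}_μ(u)^b_a`
(sum over all admissible paths from `a` to `b`; zero if not admissible). -/
def psiStarF (τ : ℂ) (r : ℝ) (k : ℕ) (μ : ℤ) (u : ℂ) (b a : ℤ) : ℂ :=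
  if adm k a b then
    ∑ δ ∈ Finset.univ.filter fun δ : Fin k → Bool => (∑ j, sg (δ j)) = b - a,
      ∏ j : Fin k,
        psiStar τ r (u + (k : ℂ) - (((j : ℕ) + 1 : ℕ) : ℂ))
          (if ((j : ℕ) + 1 : ℤ) ≤ ((k : ℤ) + μ) / 2 then 1 else -1)
          (spath k a δ ((j : ℕ) + 1)) (spath k a δ (j : ℕ))
  else 0

/-- The `L`-matrix `L^{(k)}(a,b;c,d|u) = Σ_μ ψ*^{(k)}_μ(u)^d_c ψ^{(k)}_μ(u)^a_b`. -/
def Lk (τ : ℂ) (r : ℝ) (k : ℕ) (u : ℂ) (a b c d : ℤ) : ℂ :=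
  ∑ i ∈ Finset.range (k + 1),
    psiStarF τ r k ((k : ℤ) - 2 * (i : ℤ)) u d c * psiF τ r k ((k : ℤ) - 2 * (i : ℤ)) u a b

/-- Normalized face weight `W̄(a,b;d,c|u)` (arguments ordered (NW, NE; SW, SE)). -/
def Wb (τ : ℂ) (r : ℝ) (u : ℂ) (a b d c : ℤ) : ℂ :=
  if b = a + 1 ∧ d = a + 1 ∧ c = a + 2 then 1
  else if b = a - 1 ∧ d = a - 1 ∧ c = a - 2 then 1
  else if b = a + 1 ∧ d = a + 1 ∧ c = a then
    br τ r ((a : ℂ) - u) * br τ r 1 / (br τ r (a : ℂ) * br τ r (1 + u))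
  else if b = a - 1 ∧ d = a - 1 ∧ c = a then
    br τ r ((a : ℂ) + u) * br τ r 1 / (br τ r (a : ℂ) * br τ r (1 + u))
  else if b = a + 1 ∧ d = a - 1 ∧ c = a then
    br τ r ((a : ℂ) + 1) * br τ r u / (br τ r (a : ℂ) * br τ r (1 + u))
  else if b = a - 1 ∧ d = a + 1 ∧ c = a then
    br τ r ((a : ℂ) - 1) * br τ r u / (br τ r (a : ℂ) * br τ r (1 + u))
  else 0

/-- Sequence with prescribed endpoints `d`, `c` and free interior values `f`. -/
def seqI (k : ℕ) (d c : ℤ) (f : Fin (k - 1) → ℤ) (j : ℕ) : ℤ :=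
  if h0 : j = 0 then d
  else if hj : j < k then f ⟨j - 1, by omega⟩ else c

/-- Fused face weight `W^{(k,1)}(a,b;d,c|u)`. -/
def Wk1 (τ : ℂ) (r : ℝ) (k : ℕ) (u : ℂ) (a b d c : ℤ) : ℂ :=
  if adm k a b then
    ∑' f : Fin (k - 1) → ℤ,
      ∏ j ∈ Finset.range k,
        Wb τ r (u + (k : ℂ) - ((j : ℂ) + 1))
          (cpathZ a (((k : ℤ) - (a - b)) / 2) j)
          (cpathZ a (((k : ℤ) - (a - b)) / 2) (j + 1))
          (seqI k d c f j) (seqI k d c f (j + 1))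
  else 0

/-- Fused face weight `W^{(k,l)}(a,b;d,c|u)`. -/
def Wkl (τ : ℂ) (r : ℝ) (k l : ℕ) (u : ℂ) (a b d c : ℤ) : ℂ :=
  if adm l b c then
    ∑' g : Fin (l - 1) → ℤ,
      ∏ i ∈ Finset.range l,
        Wk1 τ r k (u - (l : ℂ) + ((i : ℂ) + 1))
          (seqI l a d g i) (cpathZ b (((l : ℤ) - (b - c)) / 2) i)
          (seqI l a d g (i + 1)) (cpathZ b (((l : ℤ) - (b - c)) / 2) (i + 1))
  else 0

/-- Eight-vertex weight `ā(u)`. -/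
def aw (τ : ℂ) (r : ℝ) (u : ℂ) : ℂ :=
  th2 (1 / (2 * (r : ℂ))) (τ / 2) * th2 (u / (2 * (r : ℂ))) (τ / 2) /
    (th2 0 (τ / 2) * th2 ((1 + u) / (2 * (r : ℂ))) (τ / 2))

/-- Eight-vertex weight `b̄(u)`. -/
def bw (τ : ℂ) (r : ℝ) (u : ℂ) : ℂ :=
  th2 (1 / (2 * (r : ℂ))) (τ / 2) * th1 (u / (2 * (r : ℂ))) (τ / 2) /
    (th2 0 (τ / 2) * th1 ((1 + u) / (2 * (r : ℂ))) (τ / 2))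

/-- Eight-vertex weight `c̄(u)`. -/
def cw (τ : ℂ) (r : ℝ) (u : ℂ) : ℂ :=
  th1 (1 / (2 * (r : ℂ))) (τ / 2) * th2 (u / (2 * (r : ℂ))) (τ / 2) /
    (th2 0 (τ / 2) * th1 ((1 + u) / (2 * (r : ℂ))) (τ / 2))

/-- Eight-vertex weight `d̄(u)`. -/
def dw (τ : ℂ) (r : ℝ) (u : ℂ) : ℂ :=
  -(th1 (1 / (2 * (r : ℂ))) (τ / 2) * th1 (u / (2 * (r : ℂ))) (τ / 2)) /
    (th2 0 (τ / 2) * th2 ((1 + u) / (2 * (r : ℂ))) (τ / 2))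

/-- The normalized eight-vertex `R`-matrix entry `R̄(u)_{(ε₁,ε₂),(ε₁',ε₂')}`. -/
def Rbar (τ : ℂ) (r : ℝ) (u : ℂ) (e1 e2 e1' e2' : ℤ) : ℂ :=
  if e1' = e1 ∧ e2' = e2 ∧ e1 = e2 then aw τ r u
  else if e1' = e1 ∧ e2' = e2 ∧ e1 = -e2 then bw τ r u
  else if e1' = e2 ∧ e2' = e1 ∧ e1 = -e2 then cw τ r u
  else if e1' = -e1 ∧ e2' = -e2 ∧ e1 = e2 then dw τ r u
  else 0

/-- Sklyanin standard-basis vector `v_+(z)`. -/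
def vp (τ z : ℂ) : ℂ := th3 (2 * z) (2 * τ) - th2 (2 * z) (2 * τ)

/-- Sklyanin standard-basis vector `v_-(z)`. -/
def vm (τ z : ℂ) : ℂ := th3 (2 * z) (2 * τ) + th2 (2 * z) (2 * τ)

/-!
By the Jacobi triple product the bracket is an exponential times a theta function, and the product
formula for theta functions writes `[a + b][a - b]` as `P a * Q b - Q a * P b`. Such expressions
satisfy the three-term relation, which drives a Pascal rule for `C_n^k` and hence the elliptic
binomial theorem: for generic `β, γ`,

`[α ± z]_k = ∑ n, C_n^k(α, β, γ) [β ± z]_n [γ ± z]_{k-n}`.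

Applying it twice shows that `R_n^m(α, β, γ, δ; k)` expands `[α ± z]_n [β ± z]_{k-n}` in the
functions `[γ ± z]_m [δ ± z]_{k-m}`, and `R_m^l(γ, δ, α, β; k)` expands them back. The functions
`[α ± z]_l [β ± z]_{k-l}` are linearly independent, as evaluation at `z = α + l` is triangular, so
the two matrices are inverse to each other for generic parameters. The generic parameters are dense,
and both sides are continuous where the denominators do not vanish.
-/

section QBinomial

lemma sum_range_succ_eq_of_pascal {R : Type*} [Semiring R] {k : ℕ} {c up down : ℕ → R}
    (h_zero : c 0 = down 0) (h_last : c (k + 1) = up k)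
    (h_mid : ∀ i < k, c (i + 1) = up i + down (i + 1)) (x : ℕ → R) :
    ∑ i ∈ range (k + 2), c i * x i =
      ∑ i ∈ range (k + 1), (up i * x (i + 1) + down i * x i) := by
  have h_sum : ∑ i ∈ range k, c (i + 1) * x (i + 1) =
      ∑ i ∈ range k, up i * x (i + 1) + ∑ i ∈ range k, down (i + 1) * x (i + 1) := by
    rw [← sum_add_distrib]
    exact sum_congr rfl fun i hi ↦ by rw [h_mid i (mem_range.1 hi), add_mul]
  rw [sum_add_distrib, sum_range_succ', sum_range_succ, h_sum, h_last, h_zero,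
    sum_range_succ (fun i ↦ up i * x (i + 1)), sum_range_succ' (fun i ↦ down i * x i)]
  abel

variable {K : Type*} [Field K]

/-- The `q`-Pochhammer symbol `(q; q)_n = (1 - q) ⋯ (1 - qⁿ)`. -/
def qPoch (q : K) (n : ℕ) : K := ∏ i ∈ range n, (1 - q ^ (i + 1))

/-- The Gaussian binomial coefficient, as a quotient of `q`-Pochhammer symbols; it is only
meaningful for `k ≤ n` and when `q` is not a root of unity. -/
def qBinom (q : K) (n k : ℕ) : K := qPoch q n / (qPoch q k * qPoch q (n - k))

lemma qPoch_zero (q : K) : qPoch q 0 = 1 := prod_range_zero _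

lemma qPoch_succ (q : K) (n : ℕ) : qPoch q (n + 1) = qPoch q n * (1 - q ^ (n + 1)) :=
  prod_range_succ _ n

lemma qBinom_zero_right {q : K} {n : ℕ} (hq : qPoch q n ≠ 0) : qBinom q n 0 = 1 := by
  simp [qBinom, qPoch_zero, hq]

lemma qBinom_self {q : K} {n : ℕ} (hq : qPoch q n ≠ 0) : qBinom q n n = 1 := by
  simp [qBinom, qPoch_zero, hq]

lemma qBinom_succ_succ {q : K} (hq : ∀ n, qPoch q n ≠ 0) {n k : ℕ} (hk : k < n) :
    qBinom q (n + 1) (k + 1) = q ^ (n - k) * qBinom q n k + qBinom q n (k + 1) := by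
  obtain ⟨j, rfl⟩ := Nat.exists_eq_add_of_lt hk
  have hk' : 1 - q ^ (k + 1) ≠ 0 := right_ne_zero_of_mul (qPoch_succ q k ▸ hq (k + 1))
  have hj' : 1 - q ^ (j + 1) ≠ 0 := right_ne_zero_of_mul (qPoch_succ q j ▸ hq (j + 1))
  simp only [qBinom, show k + j + 1 + 1 - (k + 1) = j + 1 by lia,
    show k + j + 1 - k = j + 1 by lia, show k + j + 1 - (k + 1) = j by lia, qPoch_succ]
  field_simp [hq k, hq j]
  ring

lemma prod_one_add_mul_pow_eq_sum_qBinom {q : K} (hq : ∀ n, qPoch q n ≠ 0) (z : K) (n : ℕ) :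
    ∏ j ∈ range n, (1 + z * q ^ j) =
      ∑ k ∈ range (n + 1), q ^ k.choose 2 * qBinom q n k * z ^ k := by
  induction n with
  | zero => simp [qBinom_zero_right, hq]
  | succ n ih =>
    rw [sum_range_succ_eq_of_pascal (up := fun k ↦ q ^ k.choose 2 * qBinom q n k * q ^ n)
      (down := fun k ↦ q ^ k.choose 2 * qBinom q n k), prod_range_succ, ih, sum_mul]
    · exact sum_congr rfl fun k _ ↦ by ring
    · simp [qBinom_zero_right, hq]
    · rw [qBinom_self (hq _), qBinom_self (hq _), Nat.choose_succ_succ', Nat.choose_one_right]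
      ring
    · intro k hk
      have h_pow : q ^ n = q ^ k * q ^ (n - k) := by rw [← pow_add]; congr 1; lia
      rw [qBinom_succ_succ hq hk, h_pow, Nat.choose_succ_succ', Nat.choose_one_right]
      ring

lemma prod_one_sub_div_mul_prod_neg_div {q z : K} (hq : q ≠ 0) (hz : z ≠ 0) (n : ℕ) :
    (∏ j ∈ range (2 * n), (1 + -(z / q ^ n) * q ^ j)) * ∏ j ∈ range n, -(q ^ (j + 1) / z) =
      ∏ j ∈ range n, ((1 - z * q ^ j) * (1 - q ^ (j + 1) / z)) := by
  have h_low : ∏ j ∈ range n, (1 + -(z / q ^ n) * q ^ j) =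
      ∏ j ∈ range n, (1 - z / q ^ (j + 1)) := by
    rw [← prod_range_reflect]
    refine prod_congr rfl fun j hj ↦ ?_
    have h_pow : q ^ n = q ^ (n - 1 - j) * q ^ (j + 1) := by
      rw [← pow_add]; congr 1; have := mem_range.1 hj; lia
    rw [h_pow]
    field_simp
    ring
  have h_high : ∏ j ∈ range n, (1 + -(z / q ^ n) * q ^ (n + j)) =
      ∏ j ∈ range n, (1 - z * q ^ j) :=
    prod_congr rfl fun j _ ↦ by rw [pow_add]; field_simp; ring
  rw [two_mul, prod_range_add, h_low, h_high, mul_right_comm, ← prod_mul_distrib,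
    ← prod_mul_distrib]
  refine prod_congr rfl fun j _ ↦ ?_
  field_simp
  ring

end QBinomial

section TripleProduct

open Filter Topology
open scoped Real

lemma cexp_eq_jacobiTheta₂_term (v T : ℂ) (n k : ℕ) :
    cexp (2 * π * I * T) ^ k.choose 2 * (-(cexp (2 * π * I * v) / cexp (2 * π * I * T) ^ n)) ^ k *
        ∏ j ∈ range n, -(cexp (2 * π * I * T) ^ (j + 1) / cexp (2 * π * I * v)) =
      jacobiTheta₂_term (k - n) (v + 1 / 2 - T / 2) T := by
  have h_neg_add (w : ℂ) : -cexp w = cexp (w + π * I) := by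
    rw [exp_add, exp_pi_mul_I, mul_neg_one]
  have h_neg_sub (w : ℂ) : -cexp w = cexp (w - π * I) := by
    rw [exp_sub, exp_pi_mul_I, div_neg, div_one]
  have h_sum : ∑ j ∈ range n, (j : ℂ) = n * (n - 1) / 2 := by
    rw [← Nat.cast_sum, sum_range_id, ← Nat.choose_two_right, Nat.cast_choose_two]
  have h_prod : ∏ j ∈ range n, -(cexp (2 * π * I * T) ^ (j + 1) / cexp (2 * π * I * v)) =
      cexp (n * (n + 1) * π * I * T - n * (2 * π * I * v) - n * (π * I)) := by
    simp only [← exp_nat_mul, ← exp_sub, h_neg_sub, ← exp_sum]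
    congr 1
    simp only [sum_sub_distrib, ← sum_mul, Nat.cast_add, sum_add_distrib, h_sum, sum_const,
      card_range, nsmul_eq_mul]
    push_cast
    ring
  rw [h_prod]
  simp only [← exp_nat_mul, ← exp_sub, h_neg_add, ← exp_add, jacobiTheta₂_term,
    Nat.cast_choose_two]
  congr 1
  push_cast
  ring

lemma prod_one_sub_eq_sum_qBinom_mul_jacobiTheta₂_term (v : ℂ) {T : ℂ}
    (hT : ∀ n, qPoch (cexp (2 * π * I * T)) n ≠ 0) (n : ℕ) :
    ∏ j ∈ range n, ((1 - cexp (2 * π * I * v) * cexp (2 * π * I * T) ^ j) *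
        (1 - cexp (2 * π * I * T) ^ (j + 1) / cexp (2 * π * I * v))) =
      ∑ k ∈ range (2 * n + 1), qBinom (cexp (2 * π * I * T)) (2 * n) k *
        jacobiTheta₂_term (k - n) (v + 1 / 2 - T / 2) T := by
  rw [← prod_one_sub_div_mul_prod_neg_div (exp_ne_zero _) (exp_ne_zero _),
    prod_one_add_mul_pow_eq_sum_qBinom hT, sum_mul]
  refine sum_congr rfl fun k _ ↦ ?_
  rw [← cexp_eq_jacobiTheta₂_term]
  ring

/-- The coefficient of `(-1)ᵐ q^(m(m-1)/2) zᵐ` in the expansion of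
`∏_{j < n} (1 - z qʲ)(1 - qʲ⁺¹/z)(1 - qʲ⁺¹)`, extended by zero to all integers `m`. -/
def tripleCoeff (q : ℂ) (n : ℕ) (m : ℤ) : ℂ :=
  if m ∈ Icc (-n : ℤ) n then qPoch q n * qBinom q (2 * n) (n + m).toNat else 0

lemma prod_range_theta_eq_tsum (v : ℂ) {T : ℂ}
    (hT : ∀ n, qPoch (cexp (2 * π * I * T)) n ≠ 0) (n : ℕ) :
    ∏ j ∈ range n, ((1 - cexp (2 * π * I * v) * cexp (2 * π * I * T) ^ j) *
        (1 - cexp (2 * π * I * T) ^ (j + 1) / cexp (2 * π * I * v)) *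
        (1 - cexp (2 * π * I * T) ^ (j + 1))) =
      ∑' m : ℤ, tripleCoeff (cexp (2 * π * I * T)) n m *
        jacobiTheta₂_term m (v + 1 / 2 - T / 2) T := by
  have h_supp (m : ℤ) (hm : m ∉ Icc (-n : ℤ) n) : tripleCoeff (cexp (2 * π * I * T)) n m *
      jacobiTheta₂_term m (v + 1 / 2 - T / 2) T = 0 := by rw [tripleCoeff, if_neg hm, zero_mul]
  rw [tsum_eq_sum h_supp, prod_mul_distrib, prod_one_sub_eq_sum_qBinom_mul_jacobiTheta₂_term v hT,
    sum_mul]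
  refine sum_nbij' (fun k ↦ (k : ℤ) - n) (fun m ↦ (n + m).toNat) ?_ ?_ ?_ ?_ ?_
  · simp only [mem_range, mem_Icc]; lia
  · simp only [mem_range, mem_Icc]; lia
  · simp
  · simp only [mem_Icc]; lia
  · intro k hk
    have hm : (k : ℤ) - n ∈ Icc (-n : ℤ) n := by simp only [mem_range, mem_Icc] at *; lia
    rw [tripleCoeff, if_pos hm, qPoch, add_sub_cancel, Int.toNat_natCast]
    ring

variable {q : ℂ}

lemma one_sub_pow_succ_ne_zero (hq : ‖q‖ < 1) (n : ℕ) : 1 - q ^ (n + 1) ≠ 0 := by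
  refine sub_ne_zero.2 fun h ↦ (pow_lt_one₀ (norm_nonneg q) hq n.succ_ne_zero).ne ?_
  rw [← norm_pow, ← h, norm_one]

lemma qPoch_ne_zero (hq : ‖q‖ < 1) (n : ℕ) : qPoch q n ≠ 0 :=
  prod_ne_zero_iff.2 fun i _ ↦ one_sub_pow_succ_ne_zero hq i

lemma multipliable_one_sub_mul_pow (hq : ‖q‖ < 1) (c : ℂ) :
    Multipliable fun n : ℕ ↦ 1 - c * q ^ n := by
  simp only [sub_eq_add_neg]
  refine multipliable_one_add_of_summable ?_
  simpa using (summable_geometric_of_lt_one (norm_nonneg q) hq).mul_left ‖c‖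

lemma exists_tendsto_qPoch (hq : ‖q‖ < 1) :
    ∃ L ≠ 0, Tendsto (qPoch q) atTop (𝓝 L) := by
  refine ⟨∏' n, (1 - q ^ (n + 1)), ?_,
    (ModularForm.multipliable_one_sub_pow hq).tendsto_prod_tprod_nat⟩
  simp only [sub_eq_add_neg]
  refine tprod_one_add_ne_zero_of_summable
    (fun n ↦ by simpa [sub_eq_add_neg] using one_sub_pow_succ_ne_zero hq n) ?_
  simpa [pow_succ] using (summable_geometric_of_lt_one (norm_nonneg q) hq).mul_right ‖q‖

lemma tendsto_tripleCoeff (hq : ‖q‖ < 1) (m : ℤ) :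
    Tendsto (fun n ↦ tripleCoeff q n m) atTop (𝓝 1) := by
  obtain ⟨L, hL, h_lim⟩ := exists_tendsto_qPoch hq
  have h_two : Tendsto (fun n ↦ 2 * n) atTop atTop := tendsto_id.const_mul_atTop' two_pos
  have h_add : Tendsto (fun n : ℕ ↦ (n + m).toNat) atTop atTop :=
    tendsto_atTop.2 fun b ↦ by filter_upwards [eventually_ge_atTop (b + m.natAbs)]; lia
  have h_sub : Tendsto (fun n : ℕ ↦ 2 * n - (n + m).toNat) atTop atTop :=
    tendsto_atTop.2 fun b ↦ by filter_upwards [eventually_ge_atTop (b + m.natAbs)]; lia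
  have h_quot := h_lim.mul ((h_lim.comp h_two).div ((h_lim.comp h_add).mul (h_lim.comp h_sub))
    (mul_ne_zero hL hL))
  rw [show L * (L / (L * L)) = 1 by field_simp] at h_quot
  refine h_quot.congr' ?_
  filter_upwards [eventually_ge_atTop m.natAbs] with n hn
  rw [tripleCoeff, if_pos (by rw [mem_Icc]; lia)]
  rfl

lemma exists_norm_tripleCoeff_le (hq : ‖q‖ < 1) : ∃ C, ∀ n m, ‖tripleCoeff q n m‖ ≤ C := by
  obtain ⟨L, hL, h_lim⟩ := exists_tendsto_qPoch hq
  obtain ⟨A, hA⟩ := (Metric.isBounded_range_of_tendsto _ h_lim).exists_norm_le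
  obtain ⟨B, hB⟩ := (Metric.isBounded_range_of_tendsto _ (h_lim.inv₀ hL)).exists_norm_le
  simp only [Set.forall_mem_range] at hA hB
  have hA0 : 0 ≤ A := (norm_nonneg _).trans (hA 0)
  have hB0 : 0 ≤ B := (norm_nonneg _).trans (hB 0)
  refine ⟨A * (A * (B * B)), fun n m ↦ ?_⟩
  unfold tripleCoeff qBinom
  split_ifs
  · rw [div_eq_mul_inv, mul_inv, norm_mul, norm_mul, norm_mul]
    gcongr <;> apply_assumption
  · rw [norm_zero]; positivity

/-- The Jacobi triple product identity: the finite products expand over `ℤ` with uniformly bounded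
coefficients that tend to `1`, so dominated convergence applies. -/
lemma Theta_cexp_eq_jacobiTheta₂ (v : ℂ) {T : ℂ} (hT : 0 < T.im) :
    Theta (cexp (2 * π * I * T)) (cexp (2 * π * I * v)) =
      jacobiTheta₂ (v + 1 / 2 - T / 2) T := by
  have hq : ‖cexp (2 * π * I * T)‖ < 1 := UpperHalfPlane.norm_exp_two_pi_I_lt_one ⟨T, hT⟩
  obtain ⟨C, hC⟩ := exists_norm_tripleCoeff_le hq
  have h_summable := (summable_jacobiTheta₂_term_iff (v + 1 / 2 - T / 2) T).2 hT
  have h_mult : Multipliable fun j : ℕ ↦ (1 - cexp (2 * π * I * v) * cexp (2 * π * I * T) ^ j) *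
      (1 - cexp (2 * π * I * T) ^ (j + 1) / cexp (2 * π * I * v)) *
      (1 - cexp (2 * π * I * T) ^ (j + 1)) := by
    refine ((multipliable_one_sub_mul_pow hq _).mul ?_).mul
      (ModularForm.multipliable_one_sub_pow hq)
    refine (multipliable_one_sub_mul_pow hq (cexp (2 * π * I * T) / cexp (2 * π * I * v))).congr
      fun j ↦ ?_
    ring
  have h_prod := h_mult.tendsto_prod_tprod_nat
  simp only [prod_range_theta_eq_tsum v (qPoch_ne_zero hq)] at h_prod
  refine tendsto_nhds_unique h_prod
    (tendsto_tsum_of_dominated_convergence (h_summable.norm.mul_left C) (fun m ↦ ?_)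
      (Eventually.of_forall fun n m ↦ ?_))
  · simpa using (tendsto_tripleCoeff hq m).mul_const _
  · rw [norm_mul]
    gcongr
    exact hC n m

end TripleProduct

section ThetaProduct

open scoped Real

/-- Pairs of integers split by whether their sum is even, `(a + b, a - b)`, or odd,
`(a + b + 1, a - b)`. -/
def intProdParityEquiv : (ℤ × ℤ) ⊕ (ℤ × ℤ) ≃ ℤ × ℤ where
  toFun := Sum.elim (fun p ↦ (p.1 + p.2, p.1 - p.2)) fun p ↦ (p.1 + p.2 + 1, p.1 - p.2)
  invFun p := if (p.1 + p.2) % 2 = 0 then .inl ((p.1 + p.2) / 2, (p.1 - p.2) / 2)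
    else .inr ((p.1 + p.2 - 1) / 2, (p.1 - p.2 - 1) / 2)
  left_inv := by rintro (⟨a, b⟩ | ⟨a, b⟩) <;> grind
  right_inv := by rintro ⟨m, n⟩; grind

lemma jacobiTheta₂_term_mul_even (x y T : ℂ) (a b : ℤ) :
    jacobiTheta₂_term (a + b) (x + y) T * jacobiTheta₂_term (a - b) (x - y) T =
      jacobiTheta₂_term a (2 * x) (2 * T) * jacobiTheta₂_term b (2 * y) (2 * T) := by
  simp only [jacobiTheta₂_term, ← exp_add]
  congr 1
  push_cast
  ring

lemma jacobiTheta₂_term_mul_odd (x y T : ℂ) (a b : ℤ) :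
    jacobiTheta₂_term (a + b + 1) (x + y) T * jacobiTheta₂_term (a - b) (x - y) T =
      cexp (2 * π * I * (x + y) + π * I * T) *
        (jacobiTheta₂_term a (2 * x + T) (2 * T) * jacobiTheta₂_term b (2 * y + T) (2 * T)) := by
  simp only [jacobiTheta₂_term, ← exp_add]
  congr 1
  push_cast
  ring

lemma hasSum_jacobiTheta₂_term_mul (x y : ℂ) {T : ℂ} (hT : 0 < T.im) :
    HasSum (fun p : ℤ × ℤ ↦ jacobiTheta₂_term p.1 x T * jacobiTheta₂_term p.2 y T)
      (jacobiTheta₂ x T * jacobiTheta₂ y T) := by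
  have h_x := ((summable_jacobiTheta₂_term_iff x T).2 hT).norm
  have h_y := ((summable_jacobiTheta₂_term_iff y T).2 hT).norm
  rw [jacobiTheta₂, jacobiTheta₂, tsum_mul_tsum_of_summable_norm h_x h_y]
  exact (summable_mul_of_summable_norm h_x h_y).hasSum

lemma jacobiTheta₂_add_mul_jacobiTheta₂_sub (x y : ℂ) {T : ℂ} (hT : 0 < T.im) :
    jacobiTheta₂ (x + y) T * jacobiTheta₂ (x - y) T =
      jacobiTheta₂ (2 * x) (2 * T) * jacobiTheta₂ (2 * y) (2 * T) +
        cexp (2 * π * I * (x + y) + π * I * T) *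
          (jacobiTheta₂ (2 * x + T) (2 * T) * jacobiTheta₂ (2 * y + T) (2 * T)) := by
  have hT₂ : 0 < (2 * T).im := by simpa using hT
  have h_even := hasSum_jacobiTheta₂_term_mul (2 * x) (2 * y) hT₂
  have h_odd := (hasSum_jacobiTheta₂_term_mul (2 * x + T) (2 * y + T) hT₂).mul_left
    (cexp (2 * π * I * (x + y) + π * I * T))
  simp only [← jacobiTheta₂_term_mul_even] at h_even
  simp only [← jacobiTheta₂_term_mul_odd] at h_odd
  exact (hasSum_jacobiTheta₂_term_mul (x + y) (x - y) hT).unique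
    (intProdParityEquiv.hasSum_iff.1 (HasSum.sum h_even h_odd))

end ThetaProduct

section Bracket

open scoped Real

variable {τ : ℂ} {r : ℝ}

lemma im_neg_inv_pos (hτ : 0 < τ.im) : 0 < (-τ)⁻¹.im :=
  UpperHalfPlane.im_inv_neg_coe_pos ⟨τ, hτ⟩

lemma br_eq_cexp_mul_jacobiTheta₂ (hτ : 0 < τ.im) (hr : r ≠ 0) (u : ℂ) :
    br τ r u = cexp (π * I * (-τ)⁻¹ * ((u / r) ^ 2 - u / r)) *
      jacobiTheta₂ ((-τ)⁻¹ * (u / r) + 1 / 2 - (-τ)⁻¹ / 2) (-τ)⁻¹ := by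
  have hτ0 : τ ≠ 0 := by rintro rfl; simp at hτ
  have hr0 : (r : ℂ) ≠ 0 := ofReal_ne_zero.2 hr
  have h_xp (s : ℂ) : xp τ r s = cexp (π * I * (-τ)⁻¹ * (s / r)) := by
    rw [xp]; congr 1; field_simp
  have h_nome : xp τ r (2 * r) = cexp (2 * π * I * (-τ)⁻¹) := by
    rw [h_xp]; congr 1; field_simp
  have h_arg : xp τ r (2 * u) = cexp (2 * π * I * ((-τ)⁻¹ * (u / r))) := by
    rw [h_xp]; congr 1; ring
  rw [br, h_nome, h_arg, Theta_cexp_eq_jacobiTheta₂ _ (im_neg_inv_pos hτ), h_xp]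
  congr 3
  field_simp

lemma differentiable_br (hτ : 0 < τ.im) (hr : r ≠ 0) : Differentiable ℂ (br τ r) := by
  have h_theta : Differentiable ℂ fun z ↦ jacobiTheta₂ z (-τ)⁻¹ := fun z ↦
    differentiableAt_jacobiTheta₂_fst z (im_neg_inv_pos hτ)
  rw [funext (br_eq_cexp_mul_jacobiTheta₂ hτ hr)]
  exact Differentiable.mul (by fun_prop) (h_theta.comp (by fun_prop))

lemma jacobiTheta₂_two_mul_add_half_sub (T w : ℂ) :
    jacobiTheta₂ (2 * (w + 1 / 2 - T / 2)) (2 * T) =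
      cexp (4 * π * I * w) * jacobiTheta₂ (2 * w + T) (2 * T) := by
  rw [show 2 * (w + 1 / 2 - T / 2) = 2 * w - T + 1 by ring, jacobiTheta₂_add_left,
    show 2 * w + T = 2 * w - T + 2 * T by ring, jacobiTheta₂_add_left', ← mul_assoc, ← exp_add,
    show 4 * π * I * w + -π * I * (2 * T + 2 * (2 * w - T)) = 0 by ring, exp_zero, one_mul]

lemma jacobiTheta₂_two_mul_add_half_sub_add (T w : ℂ) :
    jacobiTheta₂ (2 * (w + 1 / 2 - T / 2) + T) (2 * T) = jacobiTheta₂ (2 * w) (2 * T) := by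
  rw [show 2 * (w + 1 / 2 - T / 2) + T = 2 * w + 1 by ring, jacobiTheta₂_add_left]

lemma exists_br_add_mul_br_sub (hτ : 0 < τ.im) (hr : r ≠ 0) :
    ∃ P Q : ℂ → ℂ, ∀ a b, br τ r (a + b) * br τ r (a - b) = P a * Q b - Q a * P b := by
  have h_br := br_eq_cexp_mul_jacobiTheta₂ hτ hr
  have hT := im_neg_inv_pos hτ
  generalize (-τ)⁻¹ = T at h_br hT
  refine ⟨fun a ↦ cexp (2 * π * I * T * ((a / r) ^ 2 + a / r)) *
    jacobiTheta₂ (2 * (T * (a / r)) + T) (2 * T), fun a ↦ cexp (2 * π * I * T * (a / r) ^ 2) *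
    jacobiTheta₂ (2 * (T * (a / r))) (2 * T), fun a b ↦ ?_⟩
  have h_theta :=
    jacobiTheta₂_add_mul_jacobiTheta₂_sub (T * (a / r) + 1 / 2 - T / 2) (T * (b / r)) hT
  rw [jacobiTheta₂_two_mul_add_half_sub, jacobiTheta₂_two_mul_add_half_sub_add] at h_theta
  have h_prefactor : cexp (2 * π * I * (T * (a / r) + 1 / 2 - T / 2 + T * (b / r)) + π * I * T) =
      -(cexp (2 * π * I * T * (a / r)) * cexp (2 * π * I * T * (b / r))) := by
    rw [← mul_neg_one, ← exp_pi_mul_I, ← exp_add, ← exp_add]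
    congr 1
    ring
  rw [h_br, h_br, mul_mul_mul_comm, ← exp_add,
    show T * ((a + b) / r) + 1 / 2 - T / 2 = T * (a / r) + 1 / 2 - T / 2 + T * (b / r) by ring,
    show T * ((a - b) / r) + 1 / 2 - T / 2 = T * (a / r) + 1 / 2 - T / 2 - T * (b / r) by ring,
    h_theta, h_prefactor,
    show π * I * T * (((a + b) / r) ^ 2 - (a + b) / r) +
      π * I * T * (((a - b) / r) ^ 2 - (a - b) / r) = 2 * π * I * T * (a / r) ^ 2 +
        2 * π * I * T * (b / r) ^ 2 - 2 * π * I * T * (a / r) by ring,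
    show 4 * π * I * (T * (a / r)) = 2 * π * I * T * (a / r) + 2 * π * I * T * (a / r) by ring]
  simp only [mul_add, exp_add, exp_sub]
  field_simp
  ring

lemma br_three_term (hτ : 0 < τ.im) (hr : r ≠ 0) (a b c d : ℂ) :
    br τ r (a + b) * br τ r (a - b) * (br τ r (c + d) * br τ r (c - d)) -
      br τ r (a + c) * br τ r (a - c) * (br τ r (b + d) * br τ r (b - d)) +
      br τ r (a + d) * br τ r (a - d) * (br τ r (b + c) * br τ r (b - c)) = 0 := by
  obtain ⟨P, Q, h⟩ := exists_br_add_mul_br_sub hτ hr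
  simp only [h]
  ring

lemma br_neg (hτ : 0 < τ.im) (hr : r ≠ 0) (u : ℂ) : br τ r (-u) = -br τ r u := by
  obtain ⟨P, Q, h⟩ := exists_br_add_mul_br_sub hτ hr
  have h_mul (s v : ℂ) : br τ r s * br τ r (-v) = -(br τ r s * br τ r v) := by
    have h₁ := h ((s + v) / 2) ((s - v) / 2)
    have h₂ := h ((s - v) / 2) ((s + v) / 2)
    ring_nf at h₁ h₂ ⊢
    linear_combination h₁ + h₂
  by_cases h_zero : ∀ s, br τ r s = 0
  · rw [h_zero, h_zero, neg_zero]
  · obtain ⟨s, hs⟩ := not_forall.1 h_zero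
    exact mul_left_cancel₀ hs (by rw [h_mul, mul_neg])

lemma br_zero (hτ : 0 < τ.im) (hr : r ≠ 0) : br τ r 0 = 0 :=
  self_eq_neg.1 (by simpa using br_neg hτ hr 0)

end Bracket

section ShiftedFactorial

variable {τ : ℂ} {r : ℝ}

lemma brF_zero (u : ℂ) : brF τ r u 0 = 1 := prod_range_zero _

lemma brF_succ (u : ℂ) (n : ℕ) : brF τ r u (n + 1) = brF τ r u n * br τ r (u + n) :=
  prod_range_succ _ n

lemma brF_add (u : ℂ) (m n : ℕ) : brF τ r u (m + n) = brF τ r u m * brF τ r (u + m) n := by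
  simp only [brF, prod_range_add, Nat.cast_add, add_assoc]

lemma brF_succ' (u : ℂ) (n : ℕ) : brF τ r u (n + 1) = br τ r u * brF τ r (u + 1) n := by
  rw [add_comm, brF_add, Nat.cast_one]
  simp [brF]

lemma brF_ne_zero_iff {u : ℂ} {n : ℕ} : brF τ r u n ≠ 0 ↔ ∀ j < n, br τ r (u + j) ≠ 0 := by
  simp [brF, prod_ne_zero_iff]

lemma brF_ne_zero_of_le {u : ℂ} {m n : ℕ} (hmn : m ≤ n) (hn : brF τ r u n ≠ 0) :
    brF τ r u m ≠ 0 :=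
  brF_ne_zero_iff.2 fun j hj ↦ brF_ne_zero_iff.1 hn j (hj.trans_le hmn)

lemma brF_neg_natCast_eq_zero (hτ : 0 < τ.im) (hr : r ≠ 0) {l n : ℕ} (hln : l < n) :
    brF τ r (-l) n = 0 :=
  prod_eq_zero (mem_range.2 hln) (by rw [neg_add_cancel, br_zero hτ hr])

lemma brF_neg_natCast_self (hτ : 0 < τ.im) (hr : r ≠ 0) (l : ℕ) :
    brF τ r (-l) l = (-1) ^ l * brF τ r 1 l := by
  have h_neg : ∀ j ∈ range l, br τ r (-l + (l - 1 - j : ℕ)) = -1 * br τ r (1 + j) := by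
    intro j hj
    have h_cast : ((l - 1 - j : ℕ) : ℂ) = l - 1 - j := by
      have := mem_range.1 hj
      rw [Nat.sub_sub, Nat.cast_sub (by lia)]
      push_cast
      ring
    rw [h_cast, neg_one_mul, ← br_neg hτ hr]
    congr 1
    ring
  rw [brF, ← prod_range_reflect, prod_congr rfl h_neg, prod_mul_distrib, prod_const, card_range,
    brF]

/-- The pair `(x, y)` is generic when no bracket of an integer translate of `x - y` or `x + y`
vanishes, so that every denominator in `C_n^k(·, x, y)` other than `[1]_n [1]_{k-n}` is nonzero. -/
structure IsGeneric (τ : ℂ) (r : ℝ) (x y : ℂ) : Prop where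
  sub_ne_zero : ∀ s : ℤ, br τ r (x - y + s) ≠ 0
  add_ne_zero : ∀ s : ℤ, br τ r (x + y + s) ≠ 0

namespace IsGeneric

variable {x y : ℂ}

lemma symm (hτ : 0 < τ.im) (hr : r ≠ 0) (h : IsGeneric τ r x y) : IsGeneric τ r y x where
  sub_ne_zero s := by
    have h_eq : y - x + s = -(x - y + (-s : ℤ)) := by push_cast; ring
    rw [h_eq, br_neg hτ hr]
    exact neg_ne_zero.2 (h.sub_ne_zero (-s))
  add_ne_zero s := add_comm x y ▸ h.add_ne_zero s

lemma add_intCast (h : IsGeneric τ r x y) (a b : ℤ) : IsGeneric τ r (x + a) (y + b) where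
  sub_ne_zero s := by
    have h_eq : x + a - (y + b) + s = x - y + (a - b + s : ℤ) := by push_cast; ring
    exact h_eq ▸ h.sub_ne_zero _
  add_ne_zero s := by
    have h_eq : x + a + (y + b) + s = x + y + (a + b + s : ℤ) := by push_cast; ring
    exact h_eq ▸ h.add_ne_zero _

lemma br_ne_zero_of_eq_sub (h : IsGeneric τ r x y) {u : ℂ} (s : ℤ) (hu : u = x - y + s) :
    br τ r u ≠ 0 :=
  hu ▸ h.sub_ne_zero s

lemma br_ne_zero_of_eq_add (h : IsGeneric τ r x y) {u : ℂ} (s : ℤ) (hu : u = x + y + s) :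
    br τ r u ≠ 0 :=
  hu ▸ h.add_ne_zero s

lemma brF_ne_zero_of_eq_sub (h : IsGeneric τ r x y) {u : ℂ} (s : ℤ) (hu : u = x - y + s) (n : ℕ) :
    brF τ r u n ≠ 0 :=
  brF_ne_zero_iff.2 fun j _ ↦ h.br_ne_zero_of_eq_sub (s + j) (by rw [hu]; push_cast; ring)

lemma brF_ne_zero_of_eq_add (h : IsGeneric τ r x y) {u : ℂ} (s : ℤ) (hu : u = x + y + s) (n : ℕ) :
    brF τ r u n ≠ 0 :=
  brF_ne_zero_iff.2 fun j _ ↦ h.br_ne_zero_of_eq_add (s + j) (by rw [hu]; push_cast; ring)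

end IsGeneric

end ShiftedFactorial

section Binomial

variable {τ : ℂ} {r : ℝ}

/-- The coefficient of `[b + z][b - z]` when `[a + z][a - z]` is expanded in
`[b + z][b - z]` and `[c + z][c - z]`. -/
def stepCoeff (τ : ℂ) (r : ℝ) (a b c : ℂ) : ℂ :=
  br τ r (a - c) * br τ r (a + c) / (br τ r (b - c) * br τ r (b + c))

lemma br_add_mul_br_sub_eq_stepCoeff (hτ : 0 < τ.im) (hr : r ≠ 0) (a z : ℂ) {b c : ℂ}
    (h_sub : br τ r (b - c) ≠ 0) (h_add : br τ r (b + c) ≠ 0) :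
    br τ r (a + z) * br τ r (a - z) =
      stepCoeff τ r a b c * (br τ r (b + z) * br τ r (b - z)) +
        stepCoeff τ r a c b * (br τ r (c + z) * br τ r (c - z)) := by
  have h_three := br_three_term hτ hr a b c z
  have h_neg : br τ r (c - b) = -br τ r (b - c) := by rw [← br_neg hτ hr, neg_sub]
  rw [stepCoeff, stepCoeff, h_neg, add_comm c b]
  field_simp
  linear_combination h_three

lemma Cnk_add_left (i j : ℕ) (α β γ : ℂ) :
    Cnk τ r (i + j) i α β γ =
      brF τ r 1 (i + j) / (brF τ r 1 i * brF τ r 1 j) *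
        (brF τ r (α - γ) i * brF τ r (α + γ + j) i *
          brF τ r (α - β) j * brF τ r (α + β + i) j) /
        (brF τ r (β - γ - j) i * brF τ r (γ - β - i) j * brF τ r (β + γ) (i + j)) := by
  have h_add : α + γ + ((i + j : ℕ) : ℂ) - i = α + γ + j := by push_cast; ring
  have h_sub : β - γ + (i : ℂ) - ((i + j : ℕ) : ℂ) = β - γ - j := by push_cast; ring
  rw [Cnk, h_add, h_sub, Nat.add_sub_cancel_left]

lemma Cnk_symm (i j : ℕ) (α β γ : ℂ) :
    Cnk τ r (i + j) i α β γ = Cnk τ r (j + i) j α γ β := by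
  rw [Cnk_add_left, Cnk_add_left, add_comm j i, add_comm γ β]
  ring

lemma Cnk_zero_zero (α β γ : ℂ) : Cnk τ r 0 0 α β γ = 1 := by simp [Cnk, brF_zero]

lemma Cnk_self {k : ℕ} (h1 : brF τ r 1 k ≠ 0) (α β γ : ℂ) :
    Cnk τ r k k α β γ =
      brF τ r (α - γ) k * brF τ r (α + γ) k / (brF τ r (β - γ) k * brF τ r (β + γ) k) := by
  simpa [brF_zero, h1] using Cnk_add_left (τ := τ) (r := r) k 0 α β γ

lemma Cnk_succ_self {k : ℕ} (h1 : brF τ r 1 (k + 1) ≠ 0) (α β γ : ℂ) :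
    Cnk τ r (k + 1) (k + 1) α β γ =
      Cnk τ r k k α β γ * stepCoeff τ r (α + k) (β + k) γ := by
  rw [Cnk_self h1, Cnk_self (brF_ne_zero_of_le k.le_succ h1), stepCoeff]
  simp only [brF_succ, add_sub_right_comm, add_right_comm _ (k : ℂ) γ]
  ring

lemma Cnk_succ_zero {k : ℕ} (h1 : brF τ r 1 (k + 1) ≠ 0) (α β γ : ℂ) :
    Cnk τ r (k + 1) 0 α β γ =
      Cnk τ r k 0 α β γ * stepCoeff τ r (α + k) (γ + k) β := by
  have h_symm (k : ℕ) : Cnk τ r k 0 α β γ = Cnk τ r k k α γ β := by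
    simpa using Cnk_symm (τ := τ) (r := r) 0 k α β γ
  rw [h_symm, h_symm, Cnk_succ_self h1]

/-- The common part of the three terms in the Pascal rule for `Cnk (i + j + 2) (i + 1)`. -/
def pascalFactor (τ : ℂ) (r : ℝ) (i j : ℕ) (α β γ : ℂ) : ℂ :=
  brF τ r 1 (i + j + 1) / (brF τ r 1 (i + 1) * brF τ r 1 (j + 1)) *
    (brF τ r (α - γ) (i + 1) * brF τ r (α + γ + j + 1) i *
      brF τ r (α - β) (j + 1) * brF τ r (α + β + i + 1) j) /
    (brF τ r (β - γ - j - 1) (i + 1) * brF τ r (γ - β - i - 1) (j + 1) *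
      brF τ r (β + γ) (i + j + 2))

lemma pascalFactor_symm (i j : ℕ) (α β γ : ℂ) :
    pascalFactor τ r i j α β γ = pascalFactor τ r j i α γ β := by
  rw [pascalFactor, pascalFactor, add_comm j i, add_comm γ β]
  ring

lemma Cnk_succ_succ_eq_pascalFactor_mul (i j : ℕ) (α β γ : ℂ) :
    Cnk τ r (i + 1 + (j + 1)) (i + 1) α β γ = pascalFactor τ r i j α β γ *
      (br τ r (i + j + 2) * br τ r (α + γ + i + j + 1) * br τ r (α + β + i + j + 1)) := by
  rw [Cnk_add_left, pascalFactor, show i + 1 + (j + 1) = i + j + 1 + 1 by ring, brF_succ 1,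
    brF_succ (α + γ + _), brF_succ (α + β + _)]
  push_cast
  ring_nf

lemma brF_mul_br_sub_one (u : ℂ) (n : ℕ) :
    brF τ r u (n + 1) * br τ r (u - 1) = brF τ r (u - 1) (n + 1) * br τ r (u + n) := by
  rw [mul_comm, ← sub_add_cancel u 1, add_sub_cancel_right, ← brF_succ', brF_succ]
  push_cast
  ring_nf

lemma Cnk_mul_stepCoeff {i : ℕ} (j : ℕ) (α : ℂ) {β γ : ℂ} (h1 : br τ r (1 + i) ≠ 0)
    (h_sub : br τ r (γ - β - i - 1) ≠ 0) :
    Cnk τ r (i + (j + 1)) i α β γ *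
        stepCoeff τ r (α + (i + j + 1 : ℕ)) (β + i) (γ + (j + 1 : ℕ)) =
      pascalFactor τ r i j α β γ * (br τ r (1 + i) * br τ r (α + β + i) *
        br τ r (α + γ + i + 2 * j + 2) * br τ r (γ - β - i - 1) / br τ r (γ - β - i + j)) := by
  have h_den := eq_div_of_mul_eq h_sub (brF_mul_br_sub_one (τ := τ) (r := r) (γ - β - i) j)
  have h_fact := eq_div_of_mul_eq h1 (brF_succ (τ := τ) (r := r) 1 i).symm
  have h_step : stepCoeff τ r (α + (i + j + 1 : ℕ)) (β + i) (γ + (j + 1 : ℕ)) =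
      br τ r (α - γ + i) * br τ r (α + γ + i + 2 * j + 2) /
        (br τ r (β - γ - j - 1 + i) * br τ r (β + γ + (i + j + 1 : ℕ))) := by
    rw [stepCoeff]
    push_cast
    ring_nf
  rw [Cnk_add_left, h_step, pascalFactor, h_den, h_fact, brF_succ' (α + β + i),
    brF_succ (α - γ), brF_succ (β - γ - j - 1), brF_succ (β + γ) (i + j + 1),
    show α + γ + (j + 1 : ℕ) = α + γ + j + 1 by push_cast; ring,
    show β - γ - (j + 1 : ℕ) = β - γ - j - 1 by push_cast; ring, ← add_assoc i j 1]
  simp only [div_eq_mul_inv, mul_inv, inv_inv]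
  ring

lemma br_pascal (hτ : 0 < τ.im) (hr : r ≠ 0) (i j α β γ : ℂ) :
    br τ r (i + j + 2) * br τ r (α + γ + i + j + 1) * br τ r (α + β + i + j + 1) *
        br τ r (γ - β - i + j) =
      br τ r (1 + i) * br τ r (α + β + i) * br τ r (α + γ + i + 2 * j + 2) *
          br τ r (γ - β - i - 1) -
        br τ r (1 + j) * br τ r (α + γ + j) * br τ r (α + β + j + 2 * i + 2) *
          br τ r (β - γ - j - 1) := by
  have h_three := br_three_term hτ hr (α + (β + γ) / 2 + i + j + 1) ((γ - β) / 2)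
    ((γ - β) / 2 + j + 1) ((β - γ) / 2 + i + 1)
  have h_neg : br τ r ((γ - β) / 2 - ((γ - β) / 2 + j + 1)) = -br τ r (1 + j) := by
    rw [← br_neg hτ hr]; ring_nf
  have h_neg' : br τ r ((γ - β) / 2 + ((γ - β) / 2 + j + 1)) = -br τ r (β - γ - j - 1) := by
    rw [← br_neg hτ hr]; ring_nf
  rw [h_neg, h_neg'] at h_three
  ring_nf at h_three ⊢
  linear_combination h_three

lemma Cnk_succ_succ (hτ : 0 < τ.im) (hr : r ≠ 0) {i j : ℕ} (h1 : brF τ r 1 (i + j + 2) ≠ 0)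
    (α : ℂ) {β γ : ℂ} (hβγ : IsGeneric τ r β γ) :
    Cnk τ r (i + 1 + (j + 1)) (i + 1) α β γ =
      Cnk τ r (i + (j + 1)) i α β γ *
          stepCoeff τ r (α + (i + j + 1 : ℕ)) (β + i) (γ + (j + 1 : ℕ)) +
        Cnk τ r (i + 1 + j) (i + 1) α β γ *
          stepCoeff τ r (α + (i + j + 1 : ℕ)) (γ + j) (β + (i + 1 : ℕ)) := by
  have hγβ := hβγ.symm hτ hr
  have h_sub : br τ r (γ - β - i + j) ≠ 0 :=
    hγβ.br_ne_zero_of_eq_sub (-i + j) (by push_cast; ring)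
  have h_sub_i : br τ r (γ - β - i - 1) ≠ 0 :=
    hγβ.br_ne_zero_of_eq_sub (-i - 1) (by push_cast; ring)
  have h_sub_j : br τ r (β - γ - j - 1) ≠ 0 :=
    hβγ.br_ne_zero_of_eq_sub (-j - 1) (by push_cast; ring)
  have h_neg : br τ r (β - γ - j + i) = -br τ r (γ - β - i + j) := by
    rw [← br_neg hτ hr]; ring_nf
  rw [Cnk_succ_succ_eq_pascalFactor_mul, Cnk_symm (i + 1) j,
    Cnk_mul_stepCoeff j α (brF_ne_zero_iff.1 h1 i (by lia)) h_sub_i, add_comm i j,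
    Cnk_mul_stepCoeff i α (brF_ne_zero_iff.1 h1 j (by lia)) h_sub_j, pascalFactor_symm j i, h_neg,
    ← mul_add]
  congr 1
  rw [div_neg, ← sub_eq_add_neg, ← sub_div, eq_div_iff h_sub]
  exact br_pascal hτ hr i j α β γ

end Binomial

section Expansion

variable {τ : ℂ} {r : ℝ}

/-- The even function `z ↦ [α + z]_n [α - z]_n`; for fixed `α`, `β` the products
`brSym α z n * brSym β z (k - n)`, `n ≤ k`, are the bases between which the `6j`-symbols
interpolate. -/
def brSym (τ : ℂ) (r : ℝ) (α z : ℂ) (n : ℕ) : ℂ := brF τ r (α + z) n * brF τ r (α - z) n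

lemma brSym_zero (α z : ℂ) : brSym τ r α z 0 = 1 := by simp [brSym, brF_zero]

lemma brSym_succ (α z : ℂ) (n : ℕ) :
    brSym τ r α z (n + 1) =
      brSym τ r α z n * (br τ r (α + n + z) * br τ r (α + n - z)) := by
  rw [brSym, brSym, brF_succ, brF_succ, add_right_comm, sub_add_eq_add_sub]
  ring

lemma brSym_add (α z : ℂ) (m n : ℕ) :
    brSym τ r α z (m + n) = brSym τ r α z m * brSym τ r (α + m) z n := by
  rw [brSym, brSym, brSym, brF_add, brF_add, add_right_comm, sub_add_eq_add_sub]
  ring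

lemma brSym_mul_brSym_mul_br (hτ : 0 < τ.im) (hr : r ≠ 0) (a z : ℂ) {β γ : ℂ}
    (hβγ : IsGeneric τ r β γ) (i j : ℕ) :
    brSym τ r β z i * brSym τ r γ z j * (br τ r (a + z) * br τ r (a - z)) =
      stepCoeff τ r a (β + i) (γ + j) * (brSym τ r β z (i + 1) * brSym τ r γ z j) +
        stepCoeff τ r a (γ + j) (β + i) * (brSym τ r β z i * brSym τ r γ z (j + 1)) := by
  have h_sub : br τ r (β + i - (γ + j)) ≠ 0 :=
    hβγ.br_ne_zero_of_eq_sub (i - j) (by push_cast; ring)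
  have h_add : br τ r (β + i + (γ + j)) ≠ 0 :=
    hβγ.br_ne_zero_of_eq_add (i + j) (by push_cast; ring)
  rw [br_add_mul_br_sub_eq_stepCoeff hτ hr a z h_sub h_add, brSym_succ, brSym_succ]
  ring

theorem brSym_eq_sum_Cnk (hτ : 0 < τ.im) (hr : r ≠ 0) (α z : ℂ) {β γ : ℂ}
    (hβγ : IsGeneric τ r β γ) {k : ℕ} (h1 : brF τ r 1 k ≠ 0) :
    brSym τ r α z k =
      ∑ n ∈ range (k + 1), Cnk τ r k n α β γ * (brSym τ r β z n * brSym τ r γ z (k - n)) := by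
  induction k with
  | zero => simp [brSym_zero, Cnk_zero_zero]
  | succ k ih =>
    have h_pascal := sum_range_succ_eq_of_pascal (k := k) (c := fun n ↦ Cnk τ r (k + 1) n α β γ)
      (up := fun n ↦ Cnk τ r k n α β γ * stepCoeff τ r (α + k) (β + n) (γ + (k - n : ℕ)))
      (down := fun n ↦ Cnk τ r k n α β γ * stepCoeff τ r (α + k) (γ + (k - n : ℕ)) (β + n))
      (by simpa using Cnk_succ_zero h1 α β γ) (by simpa using Cnk_succ_self h1 α β γ)
      (fun i hi ↦ by
        obtain ⟨j, rfl⟩ := Nat.exists_eq_add_of_lt hi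
        have h_sub : i + j + 1 - (i + 1) = j := by lia
        have h_sub' : i + j + 1 - i = j + 1 := by lia
        simp only [h_sub, h_sub']
        simpa only [add_assoc, add_comm, add_left_comm] using Cnk_succ_succ hτ hr h1 α hβγ)
      fun n ↦ brSym τ r β z n * brSym τ r γ z (k + 1 - n)
    rw [h_pascal, brSym_succ, ih (brF_ne_zero_of_le k.le_succ h1), sum_mul]
    refine sum_congr rfl fun n hn ↦ ?_
    have hnk : k + 1 - n = k - n + 1 := by have := mem_range.1 hn; lia
    rw [mul_assoc, brSym_mul_brSym_mul_br hτ hr _ z hβγ, hnk, Nat.add_sub_add_right]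
    ring

lemma brSym_mul_brSym_eq_sum_Ico_Cnk (hτ : 0 < τ.im) (hr : r ≠ 0) (β z : ℂ) {γ δ : ℂ}
    (hγδ : IsGeneric τ r γ δ) {k j : ℕ} (h1 : brF τ r 1 (k - j) ≠ 0) (hj : j ≤ k) :
    brSym τ r γ z j * brSym τ r β z (k - j) =
      ∑ m ∈ Ico j (k + 1), Cnk τ r (k - j) (m - j) β (γ + j) δ *
        (brSym τ r γ z m * brSym τ r δ z (k - m)) := by
  have h_gen : IsGeneric τ r (γ + j) δ := by simpa using hγδ.add_intCast j 0
  rw [brSym_eq_sum_Cnk hτ hr β z h_gen h1, mul_sum, sum_Ico_eq_sum_range, Nat.sub_add_comm hj]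
  refine sum_congr rfl fun i _ ↦ ?_
  rw [Nat.add_sub_cancel_left, brSym_add, Nat.sub_sub]
  ring

theorem brSym_mul_brSym_eq_sum_Rnm (hτ : 0 < τ.im) (hr : r ≠ 0) (α z : ℂ) {β γ δ : ℂ}
    (hγβ : IsGeneric τ r γ β) (hγδ : IsGeneric τ r γ δ) {k n : ℕ} (h1 : brF τ r 1 k ≠ 0)
    (hn : n ≤ k) :
    brSym τ r α z n * brSym τ r β z (k - n) =
      ∑ m ∈ range (k + 1),
        Rnm τ r k n m α β γ δ * (brSym τ r γ z m * brSym τ r δ z (k - m)) := by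
  have h_gen : IsGeneric τ r γ (β + k - n) := by
    simpa [add_sub_assoc] using hγβ.add_intCast 0 (k - n)
  have h_merge (j : ℕ) (hj : j ≤ n) :
      brSym τ r β z (k - n) * brSym τ r (β + k - n) z (n - j) = brSym τ r β z (k - j) := by
    rw [add_sub_assoc, ← Nat.cast_sub hn, ← brSym_add, Nat.sub_add_sub_cancel hn hj]
  calc
    _ = ∑ j ∈ range (n + 1), Cnk τ r n j α γ (β + k - n) *
          (brSym τ r γ z j * brSym τ r β z (k - j)) := by
      rw [brSym_eq_sum_Cnk hτ hr α z h_gen (brF_ne_zero_of_le hn h1), sum_mul]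
      refine sum_congr rfl fun j hj ↦ ?_
      rw [← h_merge j (Nat.lt_succ_iff.1 (mem_range.1 hj))]
      ring
    _ = ∑ j ∈ range (n + 1), ∑ m ∈ Ico j (k + 1), Cnk τ r n j α γ (β + k - n) *
          Cnk τ r (k - j) (m - j) β (γ + j) δ * (brSym τ r γ z m * brSym τ r δ z (k - m)) := by
      refine sum_congr rfl fun j hj ↦ ?_
      rw [brSym_mul_brSym_eq_sum_Ico_Cnk hτ hr β z hγδ (brF_ne_zero_of_le (Nat.sub_le k j) h1)
        ((Nat.lt_succ_iff.1 (mem_range.1 hj)).trans hn), mul_sum]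
      simp only [mul_assoc]
    _ = _ := by
      simp only [Rnm, sum_mul]
      refine sum_comm' fun j m ↦ ?_
      simp only [mem_range, mem_Ico]
      lia

end Expansion

section Biorthogonality

variable {τ : ℂ} {r : ℝ} {α β γ δ : ℂ} {k n l : ℕ}

lemma brSym_add_natCast_eq_zero (hτ : 0 < τ.im) (hr : r ≠ 0) (α : ℂ) (hln : l < n) :
    brSym τ r α (α + l) n = 0 := by
  rw [brSym, sub_add_cancel_left, brF_neg_natCast_eq_zero hτ hr hln, mul_zero]

lemma brSym_add_natCast_self_ne_zero (hτ : 0 < τ.im) (hr : r ≠ 0)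
    (hα : ∀ s : ℤ, br τ r (2 * α + s) ≠ 0) (h1 : brF τ r 1 l ≠ 0) :
    brSym τ r α (α + l) l ≠ 0 := by
  rw [brSym, sub_add_cancel_left, brF_neg_natCast_self hτ hr]
  refine mul_ne_zero (brF_ne_zero_iff.2 fun j _ ↦ ?_) (mul_ne_zero (by simp) h1)
  have h_eq : α + (α + l) + j = 2 * α + (l + j : ℤ) := by push_cast; ring
  exact h_eq ▸ hα _

lemma brSym_ne_zero_of_isGeneric (hτ : 0 < τ.im) (hr : r ≠ 0) (hαβ : IsGeneric τ r α β) :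
    brSym τ r β (α + l) n ≠ 0 :=
  mul_ne_zero (hαβ.brF_ne_zero_of_eq_add l (by push_cast; ring) n)
    ((hαβ.symm hτ hr).brF_ne_zero_of_eq_sub (-l) (by push_cast; ring) n)

theorem eq_zero_of_sum_brSym_eq_zero (hτ : 0 < τ.im) (hr : r ≠ 0) (hαβ : IsGeneric τ r α β)
    (hα : ∀ s : ℤ, br τ r (2 * α + s) ≠ 0) (h1 : brF τ r 1 k ≠ 0) {c : ℕ → ℂ}
    (hc : ∀ z, ∑ m ∈ range (k + 1), c m * (brSym τ r α z m * brSym τ r β z (k - m)) = 0)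
    (hl : l ≤ k) : c l = 0 := by
  induction l using Nat.strong_induction_on with
  | _ l ih =>
    have h_eval := hc (α + l)
    rw [sum_eq_single_of_mem l (mem_range.2 (by lia))] at h_eval
    · exact (mul_eq_zero.1 h_eval).resolve_right <|
        mul_ne_zero (brSym_add_natCast_self_ne_zero hτ hr hα (brF_ne_zero_of_le hl h1))
          (brSym_ne_zero_of_isGeneric hτ hr hαβ)
    · intro m _ hml
      rcases hml.lt_or_gt with hlt | hgt
      · rw [ih m hlt (hlt.le.trans hl), zero_mul]
      · rw [brSym_add_natCast_eq_zero hτ hr α hgt, zero_mul, mul_zero]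

theorem sum_Rnm_mul_Rnm_of_isGeneric (hτ : 0 < τ.im) (hr : r ≠ 0) (hγβ : IsGeneric τ r γ β)
    (hγδ : IsGeneric τ r γ δ) (hαδ : IsGeneric τ r α δ) (hαβ : IsGeneric τ r α β)
    (hα : ∀ s : ℤ, br τ r (2 * α + s) ≠ 0) (h1 : brF τ r 1 k ≠ 0) (hn : n ≤ k) (hl : l ≤ k) :
    ∑ m ∈ range (k + 1), Rnm τ r k n m α β γ δ * Rnm τ r k m l γ δ α β =
      if n = l then 1 else 0 := by
  refine sub_eq_zero.1 <| eq_zero_of_sum_brSym_eq_zero hτ hr hαβ hα h1 (fun z ↦ ?_) hl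
    (c := fun l ↦ ∑ m ∈ range (k + 1), Rnm τ r k n m α β γ δ * Rnm τ r k m l γ δ α β -
      if n = l then 1 else 0)
  have h_compose : brSym τ r α z n * brSym τ r β z (k - n) =
      ∑ l ∈ range (k + 1), (∑ m ∈ range (k + 1), Rnm τ r k n m α β γ δ * Rnm τ r k m l γ δ α β) *
        (brSym τ r α z l * brSym τ r β z (k - l)) := by
    rw [brSym_mul_brSym_eq_sum_Rnm hτ hr α z hγβ hγδ h1 hn]
    simp only [sum_mul]
    rw [sum_comm]
    refine sum_congr rfl fun m hm ↦ ?_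
    rw [brSym_mul_brSym_eq_sum_Rnm hτ hr γ z hαδ hαβ h1 (Nat.lt_succ_iff.1 (mem_range.1 hm)),
      mul_sum]
    simp only [mul_assoc]
  simp only [sub_mul, sum_sub_distrib, ite_mul, one_mul, zero_mul, sum_ite_eq, mem_range,
    Nat.lt_succ_iff, if_pos hn, ← h_compose, sub_self]

end Biorthogonality

section Continuity

variable {τ : ℂ} {r : ℝ} {X : Type*} [TopologicalSpace X] {a b c d : X → ℂ} {x : X}

lemma continuousAt_brF (hτ : 0 < τ.im) (hr : r ≠ 0) (ha : ContinuousAt a x) (n : ℕ) :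
    ContinuousAt (fun y ↦ brF τ r (a y) n) x :=
  tendsto_finsetProd _ fun _ _ ↦
    (differentiable_br hτ hr).continuous.continuousAt.comp (ha.add_const _)

lemma continuousAt_Cnk (hτ : 0 < τ.im) (hr : r ≠ 0) (ha : ContinuousAt a x)
    (hb : ContinuousAt b x) (hc : ContinuousAt c x) {k n : ℕ}
    (h_denom : CdenomNZ τ r k n (b x) (c x)) :
    ContinuousAt (fun y ↦ Cnk τ r k n (a y) (b y) (c y)) x := by
  obtain ⟨-, -, h_sub, h_sub', h_add⟩ := h_denom
  have h_num : ContinuousAt (fun y ↦ brF τ r (a y - c y) n * brF τ r (a y + c y + k - n) n *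
      brF τ r (a y - b y) (k - n) * brF τ r (a y + b y + n) (k - n)) x := by
    refine ((ContinuousAt.mul ?_ ?_).mul ?_).mul ?_ <;>
      exact continuousAt_brF hτ hr (by fun_prop) _
  have h_den : ContinuousAt (fun y ↦ brF τ r (b y - c y + n - k) n *
      brF τ r (c y - b y - n) (k - n) * brF τ r (b y + c y) k) x := by
    refine (ContinuousAt.mul ?_ ?_).mul ?_ <;> exact continuousAt_brF hτ hr (by fun_prop) _
  exact (continuousAt_const.mul h_num).div h_den (mul_ne_zero (mul_ne_zero h_sub h_sub') h_add)

lemma continuousAt_Rnm (hτ : 0 < τ.im) (hr : r ≠ 0) (ha : ContinuousAt a x)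
    (hb : ContinuousAt b x) (hc : ContinuousAt c x) (hd : ContinuousAt d x) {k n m : ℕ}
    (h_denom : RdenomNZ τ r k n m (b x) (c x) (d x)) :
    ContinuousAt (fun y ↦ Rnm τ r k n m (a y) (b y) (c y) (d y)) x := by
  refine tendsto_finsetSum _ fun j hj ↦ ?_
  obtain ⟨h_left, h_right⟩ := h_denom j (Nat.lt_succ_iff.1 (mem_range.1 hj))
  have hb_shift : ContinuousAt (fun y ↦ b y + k - n) x := (hb.add_const _).sub_const _
  have hc_shift : ContinuousAt (fun y ↦ c y + j) x := hc.add_const _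
  exact (continuousAt_Cnk hτ hr ha hc hb_shift h_left).mul
    (continuousAt_Cnk hτ hr hb hc_shift hd h_right)

end Continuity

section Genericity

open Filter Topology

variable {τ : ℂ} {r : ℝ} {v : ℂ}

lemma eventually_residual_br_ne_zero (hτ : 0 < τ.im) (hr : r ≠ 0) (hv : br τ r v ≠ 0) (e : ℂ)
    {c : ℂ} (hc : c ≠ 0) : ∀ᶠ t in residual ℂ, br τ r (e + c * t) ≠ 0 := by
  have h_diff : Differentiable ℂ fun t ↦ br τ r (e + c * t) :=
    (differentiable_br hτ hr).comp (by fun_prop)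
  refine residual_of_dense_open (isOpen_ne_fun h_diff.continuous continuous_const) fun t ↦ ?_
  rw [mem_closure_iff_frequently]
  by_contra h_zero
  have h_zero_near : (fun t ↦ br τ r (e + c * t)) =ᶠ[𝓝 t] fun _ ↦ 0 :=
    (not_frequently.1 h_zero).mono fun _ ↦ not_not.1
  have h_zero_everywhere := AnalyticOnNhd.eq_of_eventuallyEq (fun s _ ↦ h_diff.analyticAt s)
    (fun _ _ ↦ analyticAt_const) h_zero_near
  apply hv
  simpa [mul_div_cancel₀ _ hc] using congrFun h_zero_everywhere ((v - e) / c)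

lemma eventually_residual_isGeneric (hτ : 0 < τ.im) (hr : r ≠ 0) (hv : br τ r v ≠ 0) (x y : ℂ) :
    ∀ᶠ t in residual ℂ, IsGeneric τ r (x + t) y := by
  have h_sub := eventually_countable_forall.2 fun s : ℤ ↦
    eventually_residual_br_ne_zero hτ hr hv (x - y + s) one_ne_zero
  have h_add := eventually_countable_forall.2 fun s : ℤ ↦
    eventually_residual_br_ne_zero hτ hr hv (x + y + s) one_ne_zero
  filter_upwards [h_sub, h_add] with t ht_sub ht_add
  refine ⟨fun s ↦ ?_, fun s ↦ ?_⟩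
  · convert ht_sub s using 2
    ring
  · convert ht_add s using 2
    ring

lemma eventually_residual_forall_br_two_mul_ne_zero (hτ : 0 < τ.im) (hr : r ≠ 0)
    (hv : br τ r v ≠ 0) (x : ℂ) : ∀ᶠ t in residual ℂ, ∀ s : ℤ, br τ r (2 * (x + t) + s) ≠ 0 := by
  filter_upwards [eventually_countable_forall.2 fun s : ℤ ↦
    eventually_residual_br_ne_zero hτ hr hv (2 * x + s) two_ne_zero] with t ht s
  convert ht s using 2
  ring

lemma eventually_residual_sum_Rnm_mul_Rnm (hτ : 0 < τ.im) (hr : r ≠ 0) (α β γ δ : ℂ) {k n l : ℕ}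
    (hk : k ≠ 0) (h1 : brF τ r 1 k ≠ 0) (hn : n ≤ k) (hl : l ≤ k) :
    ∀ᶠ t in residual ℂ, ∑ m ∈ range (k + 1),
      Rnm τ r k n m (α + t) β (γ + t) δ * Rnm τ r k m l (γ + t) δ (α + t) β =
        if n = l then 1 else 0 := by
  have hv : br τ r (1 + (0 : ℕ)) ≠ 0 := brF_ne_zero_iff.1 h1 0 (Nat.pos_of_ne_zero hk)
  filter_upwards [eventually_residual_isGeneric hτ hr hv γ β,
    eventually_residual_isGeneric hτ hr hv γ δ, eventually_residual_isGeneric hτ hr hv α δ,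
    eventually_residual_isGeneric hτ hr hv α β,
    eventually_residual_forall_br_two_mul_ne_zero hτ hr hv α] with t hγβ hγδ hαδ hαβ hα
  exact sum_Rnm_mul_Rnm_of_isGeneric hτ hr hγβ hγδ hαδ hαβ hα h1 hn hl

end Genericity

/-- Biorthogonality of the elliptic 6j-symbols. -/
theorem sixj_biorthogonality (τ : ℂ) (r : ℝ) (hτ : 0 < τ.im) (hr : 0 < r)
    (k n l : ℕ) (hn : n ≤ k) (hl : l ≤ k) (α β γ δ : ℂ)
    (hd1 : ∀ m ≤ k, RdenomNZ τ r k n m β γ δ)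
    (hd2 : ∀ m ≤ k, RdenomNZ τ r k m l δ α β) :
    ∑ m ∈ Finset.range (k + 1), Rnm τ r k n m α β γ δ * Rnm τ r k m l γ δ α β =
      if n = l then 1 else 0 := by
  rcases eq_or_ne k 0 with rfl | hk
  · obtain rfl := Nat.le_zero.1 hn
    obtain rfl := Nat.le_zero.1 hl
    simp [Rnm, Cnk_zero_zero]
  · have h1 : brF τ r 1 k ≠ 0 := by simpa using (hd1 k le_rfl 0 (Nat.zero_le _)).2.1
    have h_cont : ContinuousAt (fun t : ℂ ↦ ∑ m ∈ range (k + 1),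
        Rnm τ r k n m (α + t) β (γ + t) δ * Rnm τ r k m l (γ + t) δ (α + t) β) 0 := by
      refine tendsto_finsetSum _ fun m hm ↦ ?_
      have hm : m ≤ k := Nat.lt_succ_iff.1 (mem_range.1 hm)
      refine (continuousAt_Rnm hτ hr.ne' ?_ ?_ ?_ ?_ (by simpa using hd1 m hm)).mul
        (continuousAt_Rnm hτ hr.ne' ?_ ?_ ?_ ?_ (by simpa using hd2 m hm)) <;> fun_prop
    have h_dense := dense_of_mem_residual
      (eventually_residual_sum_Rnm_mul_Rnm hτ hr.ne' α β γ δ hk h1 hn hl)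
    simpa using tendsto_nhds_unique_of_frequently_eq h_cont tendsto_const_nhds
      (mem_closure_iff_frequently.1 (h_dense 0))

end Ell
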